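/- Let (γ, u, λ₀, φ₁, φ₂, φ₃) be an extremal pair for (Σ) on [a,b], and suppose φ₂ vanishes identically on some nondegenerate subinterval [c,d] ⊆ [a,b] (c < d). Then λ₀ = 1 (the extremal is normal), φ₃ ≡ 0 and φ₁ ≡ −1 on [c,d], and u(t) = 0 for almost every t ∈ [c,d]. In particular, singular arcs of (Σ) are integral curves of the drift x·f. -/

import Mathlib

open Real MeasureTheory intervalIntegral Matrix

/-- The drift matrix `f = cos α · ![![0,1,0],![-1,0,0],![0,0,0]]`. -/
noncomputable def fM (α : ℝ) : Matrix (Fin 3) (Fin 3) ℝ :=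
  Real.cos α • !![0,1,0; -1,0,0; 0,0,0]

/-- The controlled matrix `g = sin α · ![![0,0,0],![0,0,1],![0,-1,0]]`. -/
noncomputable def gM (α : ℝ) : Matrix (Fin 3) (Fin 3) ℝ :=
  Real.sin α • !![0,0,0; 0,0,1; 0,-1,0]

/-- An admissible pair for `(Σ)` on `[a,b]`: a measurable control `u : [a,b] → [-1,1]`
together with an absolutely continuous curve `γ : [a,b] → SO(3)` solving
`γ' = γ·(f + u·g)` a.e. (expressed in integral form, entrywise). -/
structure AdmissiblePair (α a b : ℝ) (γ : ℝ → Matrix (Fin 3) (Fin 3) ℝ) (u : ℝ → ℝ) : Prop where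
  hab : a ≤ b
  humeas : Measurable u
  hubound : ∀ t ∈ Set.Icc a b, |u t| ≤ 1
  hso3 : ∀ t ∈ Set.Icc a b, γ t * (γ t).transpose = 1 ∧ (γ t).det = 1
  hcont : ContinuousOn γ (Set.Icc a b)
  hode : ∀ t ∈ Set.Icc a b, ∀ i j,
    γ t i j = γ a i j + ∫ s in a..t, (γ s * (fM α + u s • gM α)) i j

/-- Time optimality for `(Σ)`. -/
def TimeOptimal (α a b : ℝ) (γ : ℝ → Matrix (Fin 3) (Fin 3) ℝ) (u : ℝ → ℝ) : Prop :=
  AdmissiblePair α a b γ u ∧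
  ∀ a' b' γ' u', AdmissiblePair α a' b' γ' u' →
    γ' a' = γ a → γ' b' = γ b → b - a ≤ b' - a'

/-- `t` is a switching time of the control `u : [a,b] → [-1,1]`: in no neighbourhood of `t`
is `u` a.e. equal to a constant `c ∈ {-1,1}`. -/
def IsSwitching (a b : ℝ) (u : ℝ → ℝ) (t : ℝ) : Prop :=
  t ∈ Set.Icc a b ∧ ∀ ε > 0, ¬ ∃ c : ℝ, (c = 1 ∨ c = -1) ∧
    ∀ᵐ s ∂(volume.restrict (Set.Ioo (t - ε) (t + ε) ∩ Set.Icc a b)), u s = c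

/-- An extremal pair for `(Σ)`: an admissible pair together with `λ₀ ∈ {0,1}` and
absolutely continuous switching functions `φ₁, φ₂, φ₃` (never simultaneously zero)
satisfying the adjoint equations, the constancy of the Hamiltonian and the
minimality condition. -/
structure ExtremalPair (α a b : ℝ) (γ : ℝ → Matrix (Fin 3) (Fin 3) ℝ) (u : ℝ → ℝ)
    (lam0 : ℝ) (φ₁ φ₂ φ₃ : ℝ → ℝ) : Prop where
  adm : AdmissiblePair α a b γ u
  hlam : lam0 = 0 ∨ lam0 = 1
  nontriv : ∀ t ∈ Set.Icc a b, ¬(φ₁ t = 0 ∧ φ₂ t = 0 ∧ φ₃ t = 0)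
  hφ₁cont : ContinuousOn φ₁ (Set.Icc a b)
  hφ₂cont : ContinuousOn φ₂ (Set.Icc a b)
  hφ₃cont : ContinuousOn φ₃ (Set.Icc a b)
  hode1 : ∀ t ∈ Set.Icc a b, φ₁ t = φ₁ a + ∫ s in a..t, (-(u s) * φ₃ s)
  hode2 : ∀ t ∈ Set.Icc a b, φ₂ t = φ₂ a + ∫ s in a..t, φ₃ s
  hode3 : ∀ t ∈ Set.Icc a b, φ₃ t = φ₃ a +
    ∫ s in a..t, (Real.sin α ^ 2 * u s * φ₁ s - Real.cos α ^ 2 * φ₂ s)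
  hham : ∀ᵐ t ∂(volume.restrict (Set.Icc a b)), φ₁ t + u t * φ₂ t + lam0 = 0
  hmin : ∀ᵐ t ∂(volume.restrict (Set.Icc a b)), u t * φ₂ t = -|φ₂ t|

/-!
A function has a nonzero derivative only at isolated points of a level set, and these are countably
many, so the derivative vanishes almost everywhere on each level set. Applied to `φ₂` and then to
`φ₃`, this gives `φ₃ = 0` and `sin² α · u · φ₁ = 0` almost everywhere on `{φ₂ = 0}`, while the
Hamiltonian identity gives `φ₁ = -λ₀` there. Nontriviality excludes `λ₀ = 0`, hence `φ₁ = -1` and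
`u = 0`. On an interval, continuity upgrades the identities for `φ₁` and `φ₃` to every point.
-/

section LevelSets

open Filter Topology

variable {𝕜 E : Type*} [NontriviallyNormedField 𝕜] [NormedAddCommGroup E] [NormedSpace 𝕜 E]

theorem countable_setOf_eq_and_hasDerivAt_ne_zero [SecondCountableTopology 𝕜] (f : 𝕜 → E) (k : E) :
    {x | f x = k ∧ ∃ f' ≠ 0, HasDerivAt f f' x}.Countable := by
  refine (HereditarilyLindelofSpace.isLindelof _).countable_of_isDiscrete
    (isDiscrete_iff_nhdsNE.2 ?_)
  rintro x ⟨-, f', hf', hf⟩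
  rw [inf_principal_eq_bot]
  filter_upwards [hf.eventually_ne (c := k) hf'] with z hz hzk using hz hzk.1

theorem ae_eq_zero_of_eq_const_of_ae_hasDerivAt [SecondCountableTopology 𝕜] [MeasurableSpace 𝕜]
    {μ : Measure 𝕜} [NullSingletonClass μ] {f f' : 𝕜 → E}
    (hf : ∀ᵐ x ∂μ, HasDerivAt f (f' x) x) (k : E) :
    ∀ᵐ x ∂μ, f x = k → f' x = 0 := by
  filter_upwards [hf, (countable_setOf_eq_and_hasDerivAt_ne_zero f k).ae_notMem μ]
    with x hx hx_notMem hxk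
  by_contra hne
  exact hx_notMem ⟨hxk, f' x, hne, hx⟩

end LevelSets

theorem ae_hasDerivAt_of_eq_add_integral {E : Type*} [NormedAddCommGroup E] [NormedSpace ℝ E]
    [CompleteSpace E] {f f' : ℝ → E} {C : E} {a b : ℝ} (hf' : IntervalIntegrable f' volume a b)
    (hf : ∀ t ∈ Set.Icc a b, f t = C + ∫ s in a..t, f' s) :
    ∀ᵐ t ∂(volume.restrict (Set.Icc a b)), HasDerivAt f (f' t) t := by
  rw [← restrict_Ioo_eq_restrict_Icc, ae_restrict_iff' measurableSet_Ioo]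
  filter_upwards [hf'.ae_hasDerivAt_integral] with t ht htab
  have hderiv : HasDerivAt (fun x ↦ C + ∫ s in a..x, f' s) (f' t) t :=
    (ht (Set.Icc_subset_uIcc (Set.Ioo_subset_Icc_self htab)) a Set.left_mem_uIcc).const_add C
  refine hderiv.congr_of_eventuallyEq ?_
  filter_upwards [Icc_mem_nhds htab.1 htab.2] with x hx using hf x hx

theorem AdmissiblePair.intervalIntegrable_control {α a b : ℝ} {γ : ℝ → Matrix (Fin 3) (Fin 3) ℝ}
    {u : ℝ → ℝ} (h : AdmissiblePair α a b γ u) : IntervalIntegrable u volume a b := by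
  rw [intervalIntegrable_iff_integrableOn_Icc_of_le h.hab]
  exact Measure.integrableOn_of_bounded measure_Icc_lt_top.ne h.humeas.aestronglyMeasurable
    (ae_restrict_of_forall_mem measurableSet_Icc h.hubound)

namespace ExtremalPair

variable {α a b lam0 : ℝ} {γ : ℝ → Matrix (Fin 3) (Fin 3) ℝ} {u φ₁ φ₂ φ₃ : ℝ → ℝ}

theorem ae_hasDerivAt_φ₂ (h : ExtremalPair α a b γ u lam0 φ₁ φ₂ φ₃) :
    ∀ᵐ t ∂(volume.restrict (Set.Icc a b)), HasDerivAt φ₂ (φ₃ t) t :=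
  ae_hasDerivAt_of_eq_add_integral (h.hφ₃cont.intervalIntegrable_of_Icc h.adm.hab) h.hode2

theorem ae_hasDerivAt_φ₃ (h : ExtremalPair α a b γ u lam0 φ₁ φ₂ φ₃) :
    ∀ᵐ t ∂(volume.restrict (Set.Icc a b)),
      HasDerivAt φ₃ (sin α ^ 2 * u t * φ₁ t - cos α ^ 2 * φ₂ t) t := by
  have hφ₁ : ContinuousOn φ₁ (Set.uIcc a b) := by
    simpa only [Set.uIcc_of_le h.adm.hab] using h.hφ₁cont
  have hφ₂ : IntervalIntegrable φ₂ volume a b := h.hφ₂cont.intervalIntegrable_of_Icc h.adm.hab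
  exact ae_hasDerivAt_of_eq_add_integral
    (((h.adm.intervalIntegrable_control.const_mul _).mul_continuousOn hφ₁).sub
      (hφ₂.const_mul _)) h.hode3

theorem ae_φ₁_eq_neg_lam0_of_φ₂_eq_zero (h : ExtremalPair α a b γ u lam0 φ₁ φ₂ φ₃) :
    ∀ᵐ t ∂(volume.restrict (Set.Icc a b)), φ₂ t = 0 → φ₁ t = -lam0 := by
  filter_upwards [h.hham] with t hham hφ₂
  rw [hφ₂] at hham
  linarith

theorem ae_φ₃_eq_zero_of_φ₂_eq_zero (h : ExtremalPair α a b γ u lam0 φ₁ φ₂ φ₃) :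
    ∀ᵐ t ∂(volume.restrict (Set.Icc a b)), φ₂ t = 0 → φ₃ t = 0 :=
  ae_eq_zero_of_eq_const_of_ae_hasDerivAt h.ae_hasDerivAt_φ₂ 0

theorem ae_sin_sq_mul_mul_φ₁_eq_zero_of_φ₂_eq_zero (h : ExtremalPair α a b γ u lam0 φ₁ φ₂ φ₃) :
    ∀ᵐ t ∂(volume.restrict (Set.Icc a b)), φ₂ t = 0 → sin α ^ 2 * u t * φ₁ t = 0 := by
  filter_upwards [h.ae_φ₃_eq_zero_of_φ₂_eq_zero,
    ae_eq_zero_of_eq_const_of_ae_hasDerivAt h.ae_hasDerivAt_φ₃ 0] with t hφ₃ hφ₃' hφ₂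
  simpa [hφ₂] using hφ₃' (hφ₃ hφ₂)

end ExtremalPair

theorem singular_arc_general {α a b lam0 : ℝ} {γ : ℝ → Matrix (Fin 3) (Fin 3) ℝ}
    {u φ₁ φ₂ φ₃ : ℝ → ℝ} (hα : sin α ≠ 0) (hext : ExtremalPair α a b γ u lam0 φ₁ φ₂ φ₃) :
    ∀ᵐ t ∂(volume.restrict (Set.Icc a b)),
      φ₂ t = 0 → lam0 = 1 ∧ φ₃ t = 0 ∧ φ₁ t = -1 ∧ u t = 0 := by
  filter_upwards [hext.ae_φ₁_eq_neg_lam0_of_φ₂_eq_zero, hext.ae_φ₃_eq_zero_of_φ₂_eq_zero,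
    hext.ae_sin_sq_mul_mul_φ₁_eq_zero_of_φ₂_eq_zero, ae_restrict_mem measurableSet_Icc]
    with t hφ₁ hφ₃ hu ht hφ₂
  specialize hφ₁ hφ₂
  specialize hφ₃ hφ₂
  have hnormal : lam0 = 1 := hext.hlam.resolve_left fun habnormal ↦
    hext.nontriv t ht ⟨by rw [hφ₁, habnormal, neg_zero], hφ₂, hφ₃⟩
  rw [hnormal] at hφ₁
  refine ⟨hnormal, hφ₃, hφ₁, ?_⟩
  simpa [hφ₁, hα] using hu hφ₂

/-- On a singular arc (`φ₂ ≡ 0` on a nondegenerate subinterval) the extremal is normal,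
`φ₃ ≡ 0`, `φ₁ ≡ −1` and the control vanishes a.e.: singular arcs are integral curves
of the drift. -/
theorem singular_arc (α a b c d lam0 : ℝ) (γ : ℝ → Matrix (Fin 3) (Fin 3) ℝ)
    (u φ₁ φ₂ φ₃ : ℝ → ℝ) (hα : α ∈ Set.Ioo 0 (π / 2))
    (hext : ExtremalPair α a b γ u lam0 φ₁ φ₂ φ₃)
    (hac : a ≤ c) (hcd : c < d) (hdb : d ≤ b)
    (hsing : ∀ t ∈ Set.Icc c d, φ₂ t = 0) :
    lam0 = 1 ∧ (∀ t ∈ Set.Icc c d, φ₃ t = 0) ∧ (∀ t ∈ Set.Icc c d, φ₁ t = -1) ∧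
    (∀ᵐ t ∂(volume.restrict (Set.Icc c d)), u t = 0) := by
  have hsub : Set.Icc c d ⊆ Set.Icc a b := Set.Icc_subset_Icc hac hdb
  have hsinα : sin α ≠ 0 := (sin_pos_of_pos_of_lt_pi hα.1 (by linarith [hα.2, pi_pos])).ne'
  have harc : ∀ᵐ t ∂(volume.restrict (Set.Icc c d)),
      lam0 = 1 ∧ φ₃ t = 0 ∧ φ₁ t = -1 ∧ u t = 0 := by
    filter_upwards [ae_restrict_of_ae_restrict_of_subset hsub (singular_arc_general hsinα hext),
      ae_restrict_mem measurableSet_Icc] with t ht htcd using ht (hsing t htcd)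
  have : (ae (volume.restrict (Set.Icc c d))).NeBot :=
    ae_restrict_neBot.2 (by simpa using hcd)
  obtain ⟨-, hnormal, -⟩ := harc.exists
  exact ⟨hnormal,
    Measure.eqOn_Icc_of_ae_eq volume hcd.ne (harc.mono fun _ h ↦ h.2.1)
      (hext.hφ₃cont.mono hsub) continuousOn_const,
    Measure.eqOn_Icc_of_ae_eq volume hcd.ne (harc.mono fun _ h ↦ h.2.2.1)
      (hext.hφ₁cont.mono hsub) continuousOn_const,
    harc.mono fun _ h ↦ h.2.2.2⟩
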